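/- arXiv:math/0702466 — 10 statements merged into one kernel-verified Lean document; each statement's English description precedes it below -/
import Mathlib

section
/- Let M be an ultrametric space which embeds isometrically into an indivisible ultrametric space N. Then M contains no infinite strictly increasing sequence of balls: there is no sequence (B_n)_{n∈ℕ} of balls of M with B_n ⊊ B_{n+1} for all n. -/
/-- The spectrum of a point `a`: the set of distances from `a`. -/
def SpecAt {M : Type*} [MetricSpace M] (a : M) : Set ℝ := {r | ∃ x : M, dist a x = r}

/-- The spectrum of a metric space: the set of realized distances. -/
def SpecOf (M : Type*) [MetricSpace M] : Set ℝ := {r | ∃ x y : M, dist x y = r}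

/-- The spectrum of `a` within a subset `B`. -/
def SpecIn {M : Type*} [MetricSpace M] (B : Set M) (a : M) : Set ℝ := {r | ∃ x ∈ B, dist a x = r}

/-- A metric space is ultrametric if it satisfies the strong triangle inequality. -/
def UltraDist (M : Type*) [MetricSpace M] : Prop :=
  ∀ x y z : M, dist x z ≤ max (dist x y) (dist y z)

/-- A metric space is indivisible if for every subset `A`, the space embeds isometrically
into `A` or into its complement. -/
def Indiv (M : Type*) [MetricSpace M] : Prop :=
  ∀ A : Set M, (∃ f : M → M, Isometry f ∧ ∀ x, f x ∈ A) ∨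
    (∃ f : M → M, Isometry f ∧ ∀ x, f x ∉ A)

/-- A ball: an open or closed ball of nonnegative radius. -/
def IsBallM {M : Type*} [MetricSpace M] (B : Set M) : Prop :=
  ∃ (a : M) (r : ℝ), 0 ≤ r ∧ (B = Metric.ball a r ∨ B = Metric.closedBall a r)

/-- The nerve of a metric space: closed balls whose radius is a realized distance
from the center. -/
def NervOf (M : Type*) [MetricSpace M] : Set (Set M) :=
  {B | ∃ (a : M) (r : ℝ), r ∈ SpecAt a ∧ B = Metric.closedBall a r}

/-- The sons of a set `B` of diameter `r`: the open balls of radius `r` centered in `B`. -/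
def SonOf {M : Type*} [MetricSpace M] (B : Set M) : Set (Set M) :=
  {S | ∃ a ∈ B, S = Metric.ball a (Metric.diam B)}

/-- A space is spec-endogeneous when every local spec-embedding extends to an
isometric self-embedding. -/
def SpecEndog (M : Type*) [MetricSpace M] : Prop :=
  ∀ (A : Set M) (f : M → M),
    (∀ x ∈ A, ∀ y ∈ A, dist (f x) (f y) = dist x y) →
    (∀ x ∈ A, SpecAt x ⊆ SpecAt (f x)) →
    ∃ g : M → M, Isometry g ∧ ∀ x ∈ A, g x = f x

/-- The spec-extension property. -/
def SpecExt (M : Type*) [MetricSpace M] : Prop :=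
  ∀ x y y' : M, x ≠ y → SpecAt y ⊆ SpecAt y' →
    ∃ x' : M, dist y' x' = dist x y ∧ SpecAt x ⊆ SpecAt x'

/-- The infinite spec-extension property. -/
def InfSpecExt (M : Type*) [MetricSpace M] : Prop :=
  ∀ x y y' : M, x ≠ y → SpecAt y ⊆ SpecAt y' →
    ∃ S : Set M, S.Infinite ∧
      (∀ z ∈ S, dist y' z = dist x y ∧ SpecAt x ⊆ SpecAt z) ∧
      (∀ z ∈ S, ∀ z' ∈ S, z ≠ z' → dist z z' = dist x y)

theorem ball_lt_aux {M : Type*} [MetricSpace M] (hM : UltraDist M) {B : Set M} (hB : IsBallM B)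
    {a y z : M} (ha : a ∈ B) (hy : y ∈ B) (hz : z ∉ B) : dist a y < dist a z := by
  obtain ⟨c, ρ, -, h | h⟩ := hB
  · subst h
    rw [Metric.mem_ball] at *
    have h1 := hM z a c
    have h2 := hM a c y
    rw [dist_comm c y] at h2
    rw [dist_comm z a] at h1
    grind
  · subst h
    rw [Metric.mem_closedBall] at *
    have h1 := hM z a c
    have h2 := hM a c y
    rw [dist_comm c y] at h2
    rw [dist_comm z a] at h1
    grind

theorem no_seq_aux {N : Type*} [MetricSpace N] (hN : UltraDist N) (hind : Indiv N)
    (a : N) (x : ℕ → N) (hr : StrictMono fun n => dist a (x n)) : False := by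
  let S : Setoid N :=
    { r := fun u v => ∃ n, dist u v < dist a (x n)
      iseqv := by
        refine ⟨fun u => ⟨1, ?_⟩, ?_, ?_⟩
        · have h := hr (show 0 < 1 by omega)
          simp only at h
          rw [dist_self]
          exact lt_of_le_of_lt dist_nonneg h
        · rintro u v ⟨n, h⟩
          exact ⟨n, by rwa [dist_comm]⟩
        · rintro u v w ⟨n, h⟩ ⟨m, h'⟩
          refine ⟨max n m, lt_of_le_of_lt (hN u v w) (max_lt ?_ ?_)⟩
          · exact h.trans_le (hr.monotone (le_max_left n m))
          · exact h'.trans_le (hr.monotone (le_max_right n m)) }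
  let c : N → N := fun u => (Quotient.mk S u).out
  have hc : ∀ u, ∃ n, dist (c u) u < dist a (x n) := fun u => Quotient.mk_out (s := S) u
  have hcc : ∀ u v, (∃ n, dist u v < dist a (x n)) → c u = c v := by
    intro u v h
    have : Quotient.mk S u = Quotient.mk S v := Quotient.sound (s := S) h
    simp only [c, this]
  have key : ∀ g : N → N, Isometry g → ∃ n, ∀ m, n ≤ m →
      dist (c (g (x m))) (g (x m)) = dist a (x m) := by
    intro g hg
    obtain ⟨n, hn⟩ := hc (g a)
    refine ⟨n, fun m hm => ?_⟩
    have e : c (g (x m)) = c (g a) := by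
      apply hcc
      refine ⟨m + 1, ?_⟩
      rw [hg.dist_eq, dist_comm]
      exact hr (Nat.lt_succ_self m)
    rw [e]
    have h1 := hN (c (g a)) (g a) (g (x m))
    have h2 := hN (g a) (c (g a)) (g (x m))
    have h3 : dist a (x n) ≤ dist a (x m) := hr.monotone hm
    rw [hg.dist_eq] at h1 h2
    rw [dist_comm (g a)] at h2
    grind
  rcases hind {u | ∃ k, dist a (x (2 * k)) ≤ dist (c u) u ∧
      dist (c u) u < dist a (x (2 * k + 1))} with ⟨g, hg, h⟩ | ⟨g, hg, h⟩
  · obtain ⟨n, hn⟩ := key g hg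
    obtain ⟨k, h1, h2⟩ := h (x (2 * n + 1))
    rw [hn _ (by omega)] at h1 h2
    have h1' := hr.le_iff_le.1 h1
    have h2' := hr.lt_iff_lt.1 h2
    omega
  · obtain ⟨n, hn⟩ := key g hg
    apply h (x (2 * n))
    refine ⟨n, ?_⟩
    rw [hn _ (by omega)]
    exact ⟨le_rfl, hr (Nat.lt_succ_self _)⟩

/-- An ultrametric space embedding isometrically into an indivisible
ultrametric space contains no infinite strictly increasing sequence of balls. -/
theorem stmt_0 {M N : Type*} [MetricSpace M] [MetricSpace N]
    (hM : UltraDist M) (hN : UltraDist N)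
    (f : M → N) (hf : Isometry f) (hind : Indiv N) :
    ¬ ∃ B : ℕ → Set M, (∀ n, IsBallM (B n)) ∧ ∀ n, B n ⊂ B (n + 1) := by
  rintro ⟨B, hB, hs⟩
  have hmono : Monotone B := monotone_nat_of_le_succ fun n => (hs n).subset
  choose x hx hx' using fun n => Set.exists_of_ssubset (hs n)
  refine no_seq_aux hN hind (f (x 0)) (fun n => f (x (n + 1))) (strictMono_nat_of_lt_succ ?_)
  intro n
  rw [hf.dist_eq, hf.dist_eq]
  exact ball_lt_aux hM (hB (n + 2)) (hmono (by omega) (hx 0)) (hx (n + 1)) (hx' (n + 2))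
end

section
/- If an ultrametric space M is indivisible, then every nonempty family of balls of M has a maximal element under inclusion (in particular there is no infinite strictly increasing sequence of balls), and the diameter of M is attained: M is bounded and there exist x, y ∈ M with d(x,y) = δ(M), where δ(M) is the diameter of M. -/
theorem aux_far {M : Type*} [MetricSpace M] (hM : UltraDist M) {c a x : M}
    (h : dist c a < dist a x) : dist c x = dist a x := by
  have h1 := hM c a x
  have h2 := hM a c x
  rw [dist_comm a c] at h2
  rw [max_eq_right h.le] at h1
  rcases le_max_iff.1 h2 with h3 | h3
  · linarith
  · linarith

theorem aux_noseq {M : Type*} [MetricSpace M] (hM : UltraDist M) (hind : Indiv M)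
    (a : M) (x : ℕ → M) (hx : StrictMono fun n => dist a (x n)) : False := by
  set r : ℕ → ℝ := fun n => dist a (x n) with hr
  let S : Setoid M :=
    { r := fun u v => ∃ n, dist u v < r n
      iseqv :=
        { refl := fun u => ⟨1, by
            rw [dist_self]; exact lt_of_le_of_lt dist_nonneg (hx Nat.zero_lt_one)⟩
          symm := fun ⟨n, h⟩ => ⟨n, by rwa [dist_comm]⟩
          trans := fun {u v w} ⟨n, h⟩ ⟨m, h'⟩ => ⟨max n m, by
            refine lt_of_le_of_lt (hM u v w) (max_lt ?_ ?_)
            · exact h.trans_le (hx.monotone (le_max_left _ _))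
            · exact h'.trans_le (hx.monotone (le_max_right _ _))⟩ } }
  let c : M → M := fun u => (Quotient.mk S u).out
  have hc : ∀ u, ∃ n, dist (c u) u < r n := fun u => Quotient.mk_out (s := S) u
  have hcc : ∀ u v, (∃ n, dist u v < r n) → c u = c v := fun u v h => by
    have : Quotient.mk S u = Quotient.mk S v := Quotient.sound h
    simp only [c, this]
  have key : ∀ f : M → M, Isometry f → ∃ N, ∀ n ≥ N, dist (c (f (x n))) (f (x n)) = r n := by
    intro f hf
    obtain ⟨N, hN⟩ := hc (f a)
    refine ⟨N, fun n hn => ?_⟩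
    have hd : dist (f a) (f (x n)) = r n := hf.dist_eq _ _
    have e : c (f a) = c (f (x n)) := hcc _ _ ⟨n + 1, by rw [hd]; exact hx n.lt_succ_self⟩
    rw [← e, ← hd]
    apply aux_far hM
    rw [hd]
    exact hN.trans_le (hx.monotone hn)
  rcases hind {u | ∃ k, dist (c u) u = r (2 * k)} with ⟨f, hf, h⟩ | ⟨f, hf, h⟩
  · obtain ⟨N, hN⟩ := key f hf
    obtain ⟨k, hk⟩ := h (x (2 * N + 1))
    rw [hN _ (by omega)] at hk
    have := hx.injective hk
    omega
  · obtain ⟨N, hN⟩ := key f hf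
    exact h (x (2 * N)) ⟨N, hN _ (by omega)⟩

theorem aux_ball {M : Type*} [MetricSpace M] (hM : UltraDist M) {B : Set M} (hB : IsBallM B)
    {a x y : M} (ha : a ∈ B) (hx : x ∈ B) (h : dist a y ≤ dist a x) : y ∈ B := by
  obtain ⟨c, r, -, rfl | rfl⟩ := hB
  · rw [Metric.mem_ball, dist_comm] at ha hx ⊢
    refine lt_of_le_of_lt (hM c a y) (max_lt ha (h.trans_lt (lt_of_le_of_lt (hM a c x) ?_)))
    rw [dist_comm a c]
    exact max_lt ha hx
  · rw [Metric.mem_closedBall, dist_comm] at ha hx ⊢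
    refine (hM c a y).trans (max_le ha (h.trans ((hM a c x).trans ?_)))
    rw [dist_comm a c]
    exact max_le ha hx

/-- In an indivisible ultrametric space, every nonempty family of balls
has a maximal element under inclusion, the space is bounded, and the diameter is
attained. -/
theorem stmt_4 {M : Type*} [MetricSpace M] [Nonempty M]
    (hM : UltraDist M) (hind : Indiv M) :
    (∀ 𝒮 : Set (Set M), (∀ B ∈ 𝒮, IsBallM B) → 𝒮.Nonempty →
      ∃ B ∈ 𝒮, ∀ C ∈ 𝒮, B ⊆ C → B = C) ∧
    Bornology.IsBounded (Set.univ : Set M) ∧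
    ∃ x y : M, dist x y = Metric.diam (Set.univ : Set M) := by
  constructor
  · intro 𝒮 hS hne
    by_contra! hcon
    obtain ⟨B, hB⟩ := hne
    obtain ⟨C, hC, hBC, hne⟩ := hcon B hB
    obtain ⟨a, ha, -⟩ := Set.exists_of_ssubset (hBC.ssubset_of_ne hne)
    have step : ∀ t : {B : Set M // B ∈ 𝒮 ∧ a ∈ B}, ∃ t' : {B : Set M // B ∈ 𝒮 ∧ a ∈ B},
        ∃ x, x ∈ t'.1 ∧ x ∉ t.1 := by
      rintro ⟨D, hD, haD⟩
      obtain ⟨E, hE, hDE, hne⟩ := hcon D hD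
      exact ⟨⟨E, hE, hDE haD⟩, Set.exists_of_ssubset (hDE.ssubset_of_ne hne)⟩
    choose g x hx hx' using step
    let s : ℕ → {B : Set M // B ∈ 𝒮 ∧ a ∈ B} := fun n => g^[n] ⟨C, hC, ha⟩
    have hs : ∀ n, s (n + 1) = g (s n) := fun n => Function.iterate_succ_apply' _ _ _
    refine aux_noseq hM hind a (fun n => x (s n)) (strictMono_nat_of_lt_succ fun n => ?_)
    by_contra! hlt
    refine hx' (s (n + 1)) ?_
    have h1 := hx (s n)
    rw [← hs] at h1
    exact aux_ball hM (hS _ (s (n + 1)).2.1) (s (n + 1)).2.2 h1 hlt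
  · obtain ⟨a⟩ := ‹Nonempty M›
    have hmax : ∃ x, ∀ y, dist a y ≤ dist a x := by
      by_contra! hcon
      choose g hg using hcon
      refine aux_noseq hM hind a (fun n => g^[n] a) (strictMono_nat_of_lt_succ fun n => ?_)
      simp only [Function.iterate_succ_apply']
      exact hg _
    obtain ⟨x, hx⟩ := hmax
    have hle : ∀ u v : M, dist u v ≤ dist a x := fun u v =>
      (hM u a v).trans (max_le (by rw [dist_comm]; exact hx u) (hx v))
    have hb : Bornology.IsBounded (Set.univ : Set M) :=
      Metric.isBounded_iff.2 ⟨dist a x, fun u _ v _ => hle u v⟩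
    refine ⟨hb, a, x, le_antisymm ?_ ?_⟩
    · exact Metric.dist_le_diam_of_mem hb trivial trivial
    · exact Metric.diam_le_of_forall_dist_le dist_nonneg fun u _ v _ => hle u v
end

section
/- For a countable ultrametric space M, the following are equivalent: (i) M satisfies the infinite spec-extension property; (ii) M satisfies the spec-extension property and, for every B ∈ Nerv(M) and every son B' of B, there are infinitely many sons B'' of B such that the metric subspace on B' embeds isometrically into the metric subspace on B''. -/
section helpers
variable {M : Type*} [MetricSpace M]

lemma ud_iso (hM : UltraDist M) {x y z : M} (h : dist x y < dist y z) :
    dist x z = dist y z := by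
  have h1 := hM x y z
  have h2 := hM y x z
  rw [dist_comm y x] at h2
  rw [max_eq_right h.le] at h1
  rcases le_max_iff.1 h2 with h2 | h2
  · linarith
  · linarith

/-- finite partial spec-embeddings -/
def PIso (M : Type*) [MetricSpace M] :=
  {s : Finset (M × M) // (∀ p ∈ s, ∀ q ∈ s, dist p.2 q.2 = dist p.1 q.1) ∧
    ∀ p ∈ s, SpecAt p.1 ⊆ SpecAt p.2}

instance : Preorder (PIso M) := inferInstanceAs (Preorder (Subtype _))

lemma ext_step (hM : UltraDist M) (hI : InfSpecExt M) (s : PIso M) (m : M) :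
    ∃ t : PIso M, (∃ p ∈ t.1, p.1 = m) ∧ s ≤ t := by
  classical
  obtain ⟨s, hs1, hs2⟩ := s
  by_cases hm : ∃ p ∈ s, p.1 = m
  · exact ⟨⟨s, hs1, hs2⟩, hm, le_refl _⟩
  suffices H : ∃ w : M, SpecAt m ⊆ SpecAt w ∧ ∀ p ∈ s, dist w p.2 = dist m p.1 by
    obtain ⟨w, hw1, hw2⟩ := H
    refine ⟨⟨insert (m, w) s, ?_, ?_⟩, ⟨(m, w), Finset.mem_insert_self _ _, rfl⟩, ?_⟩
    · intro p hp q hq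
      rcases Finset.mem_insert.1 hp with rfl | hp <;> rcases Finset.mem_insert.1 hq with rfl | hq
      · simp
      · exact hw2 q hq
      · rw [dist_comm, hw2 p hp, dist_comm]
      · exact hs1 p hp q hq
    · intro p hp
      rcases Finset.mem_insert.1 hp with rfl | hp
      · exact hw1
      · exact hs2 p hp
    · exact Finset.subset_insert (m, w) s
  rcases s.eq_empty_or_nonempty with rfl | hne
  · exact ⟨m, subset_rfl, by simp⟩
  obtain ⟨y, hy, hmin⟩ := s.exists_min_image (fun p => dist m p.1) hne
  have hmy : m ≠ y.1 := fun h => hm ⟨y, hy, h.symm⟩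
  obtain ⟨S, hS, hS1, hS2⟩ := hI m y.1 y.2 hmy (hs2 y hy)
  have hfin : ({z ∈ S | ∃ p ∈ s, dist z p.2 < dist m y.1}).Finite := by
    have : {z ∈ S | ∃ p ∈ s, dist z p.2 < dist m y.1} =
        ⋃ p ∈ s, {z ∈ S | dist z p.2 < dist m y.1} := by
      ext z; simp
    rw [this]
    refine s.finite_toSet.biUnion fun p _ => Set.Subsingleton.finite ?_
    rintro z ⟨hz, hz'⟩ z2 ⟨hz2, hz2'⟩
    by_contra hne
    have h1 := hS2 z hz z2 hz2 hne
    have h2 := hM z p.2 z2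
    rw [dist_comm p.2 z2] at h2
    have := max_lt hz' hz2'
    linarith
  obtain ⟨w, hw, hw'⟩ := hS.exists_notMem_finite hfin
  obtain ⟨hw1, hw2⟩ := hS1 w hw
  refine ⟨w, hw2, fun p hp => ?_⟩
  have hge : dist m y.1 ≤ dist w p.2 := by
    by_contra hlt
    exact hw' ⟨hw, p, hp, not_le.1 hlt⟩
  rw [dist_comm] at hw1
  rcases (hmin p hp).lt_or_eq with h | h
  · have h3 : dist y.1 p.1 = dist m p.1 := by
      have h' : dist y.1 m < dist m p.1 := by rw [dist_comm]; exact h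
      exact ud_iso hM h'
    have h4 := hs1 y hy p hp
    rw [h3] at h4
    rw [ud_iso hM (y := y.2) (by rw [hw1, h4]; exact h), h4]
  · rw [← h]
    refine le_antisymm ?_ hge
    have h1 := hM w y.2 p.2
    have h2 := hM y.1 m p.1
    rw [hw1, hs1 y hy p hp] at h1
    rw [dist_comm y.1 m, ← h, max_self] at h2
    exact h1.trans (max_le le_rfl h2)

lemma exists_ext [Countable M] (hM : UltraDist M) (hI : InfSpecExt M) {b z : M}
    (h : SpecAt b ⊆ SpecAt z) : ∃ g : M → M, (∀ x y, dist (g x) (g y) = dist x y) ∧ g b = z := by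
  classical
  haveI : Encodable M := Encodable.ofCountable M
  let s0 : PIso M := ⟨{(b, z)}, by simp, by simpa using h⟩
  let D : M → Order.Cofinal (PIso M) := fun m =>
    { carrier := {t | ∃ p ∈ t.1, p.1 = m}
      isCofinal := fun s => by
        obtain ⟨t, ht, hst⟩ := ext_step hM hI s m
        exact ⟨t, ht, hst⟩ }
  let I := Order.idealOfCofinals s0 D
  have hex : ∀ m, ∃ w, ∃ t ∈ I, (m, w) ∈ t.1 := by
    intro m
    obtain ⟨t, ⟨p, hp, hpm⟩, htI⟩ := Order.cofinal_meets_idealOfCofinals s0 D m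
    exact ⟨p.2, t, htI, by rw [← hpm]; exact hp⟩
  have key : ∀ x y x' y', (∃ t ∈ I, (x, x') ∈ t.1) → (∃ t ∈ I, (y, y') ∈ t.1) →
      dist x' y' = dist x y := by
    rintro x y x' y' ⟨t, ht, hxt⟩ ⟨u, hu, hyu⟩
    obtain ⟨v, hv, htv, huv⟩ := I.directed t ht u hu
    exact v.2.1 _ (htv hxt) _ (huv hyu)
  choose g hg using hex
  refine ⟨g, fun x y => key _ _ _ _ (hg x) (hg y), ?_⟩
  have := key b b (g b) z (hg b)
    ⟨s0, Order.mem_idealOfCofinals s0 D, Finset.mem_singleton_self _⟩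
  rw [dist_self] at this
  exact dist_eq_zero.1 this

lemma ud_diam (hM : UltraDist M) {a c : M} {r : ℝ} (h : dist a c = r) :
    Metric.diam (Metric.closedBall a r) = r := by
  have hr : 0 ≤ r := h ▸ dist_nonneg
  apply le_antisymm
  · refine Metric.diam_le_of_forall_dist_le hr fun x hx y hy => ?_
    have := hM x a y
    rw [dist_comm a y] at this
    exact this.trans (max_le hx hy)
  · conv_lhs => rw [← h]
    refine Metric.dist_le_diam_of_mem Metric.isBounded_closedBall ?_ ?_
    · simpa using hr
    · simp [dist_comm, h]

end helpers

/-- For a countable ultrametric space, the infinite spec-extension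
property is equivalent to the spec-extension property together with: each son of a
member of the nerve embeds into infinitely many sons. -/
theorem stmt_6 {M : Type*} [MetricSpace M] [Countable M] (hM : UltraDist M) :
    InfSpecExt M ↔
      (SpecExt M ∧ ∀ B ∈ NervOf M, 0 < Metric.diam B → ∀ B' ∈ SonOf B,
        {B'' | B'' ∈ SonOf B ∧ ∃ f : ↥B' → ↥B'', Isometry f}.Infinite) := by
  constructor
  · intro hI
    refine ⟨?_, ?_⟩
    · intro x y y' hxy hs
      obtain ⟨S, hS, hS1, -⟩ := hI x y y' hxy hs
      obtain ⟨w, hw⟩ := hS.nonempty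
      exact ⟨w, hS1 w hw⟩
    · rintro B ⟨a, r, ⟨c, hc⟩, rfl⟩ hd B' ⟨b, hb, rfl⟩
      rw [SonOf, ud_diam hM hc]
      rw [ud_diam hM hc] at hd
      obtain ⟨e, he, he'⟩ : ∃ e, dist b e = r ∧ dist e a ≤ r := by
        have hb' : dist b a ≤ r := hb
        rcases hb'.lt_or_eq with h | h
        · exact ⟨c, by rw [ud_iso hM (y := a) (by rw [hc]; exact h), hc], by rw [dist_comm, hc]⟩
        · exact ⟨a, h, by simpa using hd.le⟩
      have hbe : b ≠ e := by
        rintro rfl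
        rw [dist_self] at he
        linarith
      obtain ⟨S, hS, hS1, hS2⟩ := hI b e e hbe subset_rfl
      rw [he] at hS1 hS2
      have hinj : Set.InjOn (fun z => Metric.ball z r) S := by
        intro z hz z' hz' hzz
        by_contra hne
        have h1 := hS2 z hz z' hz' hne
        have h2 : z ∈ Metric.ball z' r := by
          have : Metric.ball z r = Metric.ball z' r := hzz
          rw [← this]; exact Metric.mem_ball_self hd
        rw [Metric.mem_ball] at h2
        linarith
      refine (hS.image hinj).mono ?_
      rintro _ ⟨z, hz, rfl⟩
      obtain ⟨h1, h2⟩ := hS1 z hz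
      refine ⟨⟨z, ?_, rfl⟩, ?_⟩
      · have := hM z e a
        rw [dist_comm z e, h1] at this
        exact this.trans (max_le le_rfl he')
      · obtain ⟨g, hg, hgb⟩ := exists_ext hM hI h2
        refine ⟨fun x => ⟨g x.1, ?_⟩, ?_⟩
        · rw [Metric.mem_ball, ← hgb, hg]
          exact x.2
        · exact Isometry.of_dist_eq fun x y => hg x.1 y.1
  · rintro ⟨hE, hN⟩ x y y' hxy hs
    obtain ⟨x', hx1, hx2⟩ := hE x y y' hxy hs
    have hr : 0 < dist x y := dist_pos.2 hxy
    generalize dist x y = r at *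
    have hN' := hN (Metric.closedBall y' r) ⟨y', r, ⟨x', hx1⟩, rfl⟩
    rw [SonOf, ud_diam hM hx1] at hN'
    have hN2 := hN' hr (Metric.ball x' r) ⟨x', by rw [Metric.mem_closedBall, dist_comm, hx1], rfl⟩
    have hN3 := hN2.sdiff (Set.finite_singleton (Metric.ball y' r))
    set T : Set (Set M) := _ \ {Metric.ball y' r} with hT
    have hch : ∀ C : Set M, ∃ w : M, C ∈ T → w ∈ C ∧ C = Metric.ball w r ∧ dist y' w = r ∧
        SpecAt x' ⊆ SpecAt w := by
      intro C
      by_cases hC : C ∈ T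
      swap
      · exact ⟨x', fun h => absurd h hC⟩
      obtain ⟨⟨⟨a, ha, rfl⟩, f, hf⟩, hC2⟩ := hC
      let o : Metric.ball x' r := ⟨x', Metric.mem_ball_self hr⟩
      have hball : ∀ u v : M, u ∈ Metric.ball v r → Metric.ball v r = Metric.ball u r := by
        have : ∀ u v w : M, dist u v < r → dist w v < r → dist w u < r := by
          intro u v w h1 h2
          have := hM w v u
          rw [dist_comm v u] at this
          exact this.trans_lt (max_lt h2 h1)
        intro u v huv
        ext w
        refine ⟨fun hw => this u v w huv hw, fun hw => this v u w ?_ hw⟩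
        rw [dist_comm]; exact huv
      have hw : (f o).1 ∈ Metric.ball a r := (f o).2
      have hyw : dist y' (f o).1 = r := by
        have h1 : dist y' (f o).1 ≤ r := by
          have := hM y' a (f o).1
          have h2 : dist a (f o).1 < r := by rw [dist_comm]; exact hw
          rw [dist_comm y' a] at this
          exact this.trans (max_le ha h2.le)
        refine h1.lt_or_eq.resolve_left fun h => hC2 ?_
        rw [Set.mem_singleton_iff, hball _ _ hw]
        exact hball _ _ h
      refine ⟨(f o).1, fun _ => ⟨hw, hball _ _ hw, hyw, ?_⟩⟩
      rintro q ⟨u, rfl⟩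
      rcases lt_trichotomy (dist x' u) r with h | h | h
      · let u' : Metric.ball x' r := ⟨u, by rw [Metric.mem_ball, dist_comm]; exact h⟩
        exact ⟨(f u').1, hf.dist_eq o u'⟩
      · exact ⟨y', by rw [dist_comm, hyw, h]⟩
      · refine ⟨u, ud_iso hM (lt_of_le_of_lt ?_ h)⟩
        have := hM (f o).1 y' x'
        rw [dist_comm _ y', hyw, hx1, max_self] at this
        exact this
    choose w hw using hch
    refine ⟨w '' T, hN3.image ?_, ?_, ?_⟩
    · intro C hC C' hC' h
      rw [(hw C hC).2.1, (hw C' hC').2.1, h]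
    · rintro _ ⟨C, hC, rfl⟩
      exact ⟨(hw C hC).2.2.1, hx2.trans (hw C hC).2.2.2⟩
    · rintro _ ⟨C, hC, rfl⟩ _ ⟨C', hC', rfl⟩ hne
      have h1 := hM (w C) y' (w C')
      rw [dist_comm _ y', (hw C hC).2.2.1, (hw C' hC').2.2.1, max_self] at h1
      refine h1.lt_or_eq.resolve_left fun h => hne ?_
      have hCC : C = C' := by
        rw [(hw C hC).2.1, (hw C' hC').2.1]
        have : ∀ u v t : M, dist u v < r → dist t v < r → dist t u < r := by
          intro u v t h1 h2
          have := hM t v u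
          rw [dist_comm v u] at this
          exact this.trans_lt (max_lt h2 h1)
        ext t
        exact ⟨fun ht => this _ _ t (by rw [dist_comm]; exact h) ht, fun ht => this _ _ t h ht⟩
      rw [hCC]
end

section
/- Let M be a countable ultrametric space such that every non-trivial member of Nerv(M) has infinitely many sons. Then the following are equivalent: (i) every local spec-embedding of M whose domain is a singleton extends to an isometric embedding of M into M, and for every B ∈ Nerv(M) the family MSpec(M↾B) := {Spec(M↾B, a) : a ∈ B} is up-directed; (ii) for all y, y', x ∈ M, if Spec(M,y) ⊆ Spec(M,y') then there is some x' with d(y',x') ≤ d(x,y) and Spec(M,x) ⊆ Spec(M,x'), and for every B ∈ Nerv(M) and every a ∈ B, the metric subspace on B embeds isometrically into the metric subspace on B ∩ M(a). -/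
theorem aux_iso {M : Type*} [MetricSpace M] (hM : UltraDist M) {u w x : M}
    (h : dist u w < dist u x) : dist w x = dist u x := by
  have h1 := hM u w x
  have h2 := hM w u x
  rw [dist_comm w u] at h2
  rcases le_max_iff.1 h1 with h1 | h1
  · linarith
  · rcases le_max_iff.1 h2 with h2 | h2 <;> linarith

theorem aux_le {M : Type*} [MetricSpace M] (hM : UltraDist M) {u w x : M} {r : ℝ}
    (h : dist u w ≤ r) (h' : dist w x ≤ r) : dist u x ≤ r :=
  (hM u w x).trans (max_le h h')

theorem aux_lt {M : Type*} [MetricSpace M] (hM : UltraDist M) {u w x : M} {r : ℝ}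
    (h : dist u w < r) (h' : dist w x < r) : dist u x < r :=
  (hM u w x).trans_lt (max_lt h h')

theorem aux_avoid0 {M : Type*} [MetricSpace M] (hM : UltraDist M)
    (hsons : ∀ B ∈ NervOf M, B.Nontrivial → (SonOf B).Infinite)
    (b : M) (r : ℝ) (hr : 0 < r) (hb : r ∈ SpecAt b) (F : Finset M) :
    ∃ w, dist b w ≤ r ∧ ∀ z ∈ F, r ≤ dist w z := by
  by_contra hcon
  push Not at hcon
  obtain ⟨x, hx⟩ := id hb
  have hbB : b ∈ Metric.closedBall b r := Metric.mem_closedBall_self hr.le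
  have hxB : x ∈ Metric.closedBall b r := by
    rw [Metric.mem_closedBall, dist_comm]; exact hx.le
  have hdiam : Metric.diam (Metric.closedBall b r) = r := by
    apply le_antisymm
    · apply Metric.diam_le_of_forall_dist_le hr.le
      intro p hp q hq
      rw [Metric.mem_closedBall] at hp hq
      exact aux_le hM hp (by rwa [dist_comm])
    · rw [← hx]
      rw [hx]
      conv_lhs => rw [← hx]
      exact Metric.dist_le_diam_of_mem Metric.isBounded_closedBall hbB hxB
  have hinf := hsons (Metric.closedBall b r) ⟨b, r, hb, rfl⟩
    ⟨b, hbB, x, hxB, by intro h; rw [h, dist_self] at hx; linarith⟩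
  apply hinf
  apply (F.finite_toSet.image (fun z => Metric.ball z r)).subset
  rintro S ⟨w, hw, rfl⟩
  rw [Metric.mem_closedBall, dist_comm] at hw
  obtain ⟨z, hz, hwz⟩ := hcon w hw
  refine ⟨z, hz, ?_⟩
  rw [hdiam]
  ext p
  simp only [Metric.mem_ball]
  constructor
  · intro h
    exact aux_lt hM h (by rwa [dist_comm])
  · intro h
    exact aux_lt hM h hwz

theorem aux_pigeon {M : Type*} [MetricSpace M] (hM : UltraDist M) (r : ℝ)
    (S F : Finset M) (hcard : F.card < S.card)
    (hS : ∀ p ∈ S, ∀ q ∈ S, p ≠ q → r ≤ dist p q) :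
    ∃ p ∈ S, ∀ z ∈ F, r ≤ dist p z := by
  by_contra hcon
  push Not at hcon
  choose! f hf hfr using hcon
  obtain ⟨p, hp, q, hq, hne, heq⟩ :=
    Finset.exists_ne_map_eq_of_card_lt_of_maps_to hcard (f := f) (fun p hp => hf p hp)
  have h1 := hfr p hp
  have h2 := hfr q hq
  rw [← heq, dist_comm] at h2
  have := aux_lt hM h1 h2
  linarith [hS p hp q hq hne]

theorem aux_ext {M : Type*} [MetricSpace M] [Countable M] (hM : UltraDist M)
    (Q : M → Prop) (hQ : ∀ c c' : M, SpecAt c ⊆ SpecAt c' → Q c → Q c')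
    (H1 : ∀ y y' x : M, SpecAt y ⊆ SpecAt y' → Q y' →
      ∃ x', dist y' x' ≤ dist x y ∧ SpecAt x ⊆ SpecAt x' ∧ Q x')
    (H2 : ∀ (b c : M) (r : ℝ), 0 < r → r ∈ SpecAt b → dist b c ≤ r → ∀ F : Finset M,
      ∃ c', dist b c' ≤ r ∧ SpecAt c ⊆ SpecAt c' ∧ ∀ z ∈ F, r ≤ dist c' z)
    (y0 y1 : M) (h0 : SpecAt y0 ⊆ SpecAt y1) (hq0 : Q y1) :
    ∃ g : M → M, Isometry g ∧ g y0 = y1 ∧ ∀ x, Q (g x) := by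
  classical
  let good : Finset (M × M) → Prop := fun S =>
    (y0, y1) ∈ S ∧ (∀ p ∈ S, SpecAt p.1 ⊆ SpecAt p.2 ∧ Q p.2) ∧
      ∀ p ∈ S, ∀ q ∈ S, dist p.2 q.2 = dist p.1 q.1
  have step : ∀ (S : {S // good S}) (x : M), ∃ T : {S // good S},
      S.1 ⊆ T.1 ∧ ∃ x', (x, x') ∈ T.1 := by
    rintro ⟨S, hS0, hS1, hS2⟩ x
    by_cases hx : ∃ x', (x, x') ∈ S
    · exact ⟨⟨S, hS0, hS1, hS2⟩, subset_rfl, hx⟩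
    obtain ⟨p, hp, hmin⟩ := S.exists_min_image (fun p => dist x p.1) ⟨_, hS0⟩
    have hpos : 0 < dist x p.1 := by
      apply dist_pos.2
      rintro rfl
      exact hx ⟨p.2, hp⟩
    obtain ⟨x1, hx1, hx1s, hx1Q⟩ := H1 p.1 p.2 x (hS1 p hp).1 (hS1 p hp).2
    obtain ⟨c, hc, hcs, hcF⟩ := H2 p.2 x1 (dist x p.1) hpos
      ((hS1 p hp).1 ⟨x, dist_comm _ _⟩) hx1 (S.image Prod.snd)
    have hd : ∀ q ∈ S, dist c q.2 = dist x q.1 := by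
      intro q hq
      have e := hS2 p hp q hq
      rcases (hmin q hq).lt_or_eq with hlt | heq
      · have e1 : dist p.1 q.1 = dist x q.1 := aux_iso hM hlt
        have e2 : dist c q.2 = dist p.2 q.2 := aux_iso hM (by linarith)
        linarith
      · apply le_antisymm
        · have e1 : dist p.1 q.1 ≤ dist x p.1 :=
            aux_le hM (dist_comm _ _).le heq.ge
          rw [← heq]
          exact aux_le hM (by rwa [dist_comm]) (by linarith)
        · rw [← heq]
          exact hcF _ (Finset.mem_image_of_mem _ hq)
    refine ⟨⟨insert (x, c) S, Finset.mem_insert_of_mem hS0, ?_, ?_⟩,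
      Finset.subset_insert _ _, c, Finset.mem_insert_self _ _⟩
    · intro q hq
      rcases Finset.mem_insert.1 hq with rfl | hq
      · exact ⟨hx1s.trans hcs, hQ _ _ hcs hx1Q⟩
      · exact hS1 q hq
    · intro q hq q' hq'
      rcases Finset.mem_insert.1 hq with rfl | hq <;>
      rcases Finset.mem_insert.1 hq' with rfl | hq'
      · simp
      · exact hd _ hq'
      · rw [dist_comm, dist_comm q.1]; exact hd _ hq
      · exact hS2 q hq q' hq'
  choose nxt hsub hmem using step
  have : Nonempty M := ⟨y0⟩
  obtain ⟨e, he⟩ := exists_surjective_nat M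
  have hstart : good {(y0, y1)} := by
    refine ⟨by simp, ?_, ?_⟩
    · intro p hp; rw [Finset.mem_singleton] at hp; subst hp; exact ⟨h0, hq0⟩
    · intro p hp q hq
      rw [Finset.mem_singleton] at hp hq; subst hp; subst hq; simp
  let s : ℕ → {S // good S} := fun n => Nat.rec ⟨_, hstart⟩ (fun n S => nxt S (e n)) n
  have hmono : Monotone (fun n => (s n).1) := monotone_nat_of_le_succ (fun n => hsub (s n) (e n))
  have hall : ∀ x, ∃ x' n, (x, x') ∈ (s n).1 := by
    intro x
    obtain ⟨n, rfl⟩ := he x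
    obtain ⟨x', hx'⟩ := hmem (s n) (e n)
    exact ⟨x', n + 1, hx'⟩
  choose g k hg using hall
  have hiso : ∀ x y, dist (g x) (g y) = dist x y := by
    intro x y
    exact (s (max (k x) (k y))).2.2.2 _ (hmono (le_max_left _ _) (hg x)) _
      (hmono (le_max_right _ _) (hg y))
  refine ⟨g, Isometry.of_dist_eq hiso, ?_, fun x => ((s (k x)).2.2.1 _ (hg x)).2⟩
  have := (s (k y0)).2.2.2 _ (hg y0) _ (s (k y0)).2.1
  simpa using this

theorem aux_specmono {M : Type*} [MetricSpace M] (g : M → M) (hg : Isometry g) (x : M) :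
    SpecAt x ⊆ SpecAt (g x) := by
  rintro t ⟨z, rfl⟩
  exact ⟨g z, hg.dist_eq _ _⟩

theorem aux_dir {M : Type*} [MetricSpace M] (hM : UltraDist M)
    (h : ∀ B ∈ NervOf M, ∀ a ∈ B, ∀ b ∈ B, ∃ c ∈ B,
        SpecIn B a ⊆ SpecIn B c ∧ SpecIn B b ⊆ SpecIn B c)
    (b : M) (r : ℝ) (hb : r ∈ SpecAt b) (u v : M) (hu : dist b u ≤ r) (hv : dist b v ≤ r) :
    ∃ w, dist b w ≤ r ∧ SpecAt u ⊆ SpecAt w ∧ SpecAt v ⊆ SpecAt w := by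
  obtain ⟨w, hw, h1, h2⟩ := h (Metric.closedBall b r) ⟨b, r, hb, rfl⟩ u
    (by rwa [Metric.mem_closedBall, dist_comm]) v (by rwa [Metric.mem_closedBall, dist_comm])
  rw [Metric.mem_closedBall, dist_comm] at hw
  have key : ∀ u, dist b u ≤ r →
      SpecIn (Metric.closedBall b r) u ⊆ SpecIn (Metric.closedBall b r) w →
      SpecAt u ⊆ SpecAt w := by
    rintro u hu hs t ⟨x, rfl⟩
    by_cases hx : dist b x ≤ r
    · obtain ⟨z, -, hz⟩ := hs ⟨x, by rwa [Metric.mem_closedBall, dist_comm], rfl⟩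
      exact ⟨z, hz⟩
    · push Not at hx
      refine ⟨x, ?_⟩
      rw [aux_iso hM (hu.trans_lt hx), aux_iso hM (hw.trans_lt hx)]
  exact ⟨w, hw, key u hu h1, key v hv h2⟩

theorem aux_many {M : Type*} [MetricSpace M] (hM : UltraDist M)
    (hsons : ∀ B ∈ NervOf M, B.Nontrivial → (SonOf B).Infinite)
    (h1 : ∀ y y' : M, SpecAt y ⊆ SpecAt y' → ∃ g : M → M, Isometry g ∧ g y = y')
    (h2 : ∀ B ∈ NervOf M, ∀ a ∈ B, ∀ b ∈ B, ∃ c ∈ B,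
        SpecIn B a ⊆ SpecIn B c ∧ SpecIn B b ⊆ SpecIn B c)
    (b c : M) (r : ℝ) (hr : 0 < r) (hb : r ∈ SpecAt b) (hc : dist b c ≤ r) (n : ℕ) :
    ∃ S : Finset M, S.card = n ∧ (∀ p ∈ S, dist b p ≤ r ∧ SpecAt c ⊆ SpecAt p) ∧
      ∀ p ∈ S, ∀ q ∈ S, p ≠ q → r ≤ dist p q := by
  classical
  induction n with
  | zero => exact ⟨∅, by simp, by simp, by simp⟩
  | succ n ih =>
    obtain ⟨S, hn, hS, hSd⟩ := ih
    obtain ⟨w, hw, hwS⟩ := aux_avoid0 hM hsons b r hr hb S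
    obtain ⟨w', hw', hs1, hs2⟩ := aux_dir hM h2 b r hb w c hw hc
    obtain ⟨g, hg, rfl⟩ := h1 w w' hs1
    have hni : g w ∉ S.image g := by
      intro h
      obtain ⟨p, hp, hpe⟩ := Finset.mem_image.1 h
      have := hg.injective hpe
      subst this
      have := hwS p hp
      rw [dist_self] at this
      linarith
    refine ⟨insert (g w) (S.image g), ?_, ?_, ?_⟩
    · rw [Finset.card_insert_of_notMem hni, Finset.card_image_of_injective _ hg.injective, hn]
    · intro q hq
      rcases Finset.mem_insert.1 hq with rfl | hq
      · exact ⟨hw', hs2⟩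
      · obtain ⟨p, hp, rfl⟩ := Finset.mem_image.1 hq
        refine ⟨aux_le hM hw' ?_, (hS p hp).2.trans (aux_specmono g hg p)⟩
        rw [hg.dist_eq]
        exact aux_le hM (by rw [dist_comm]; exact hw) (hS p hp).1
    · intro q hq q' hq' hne
      rcases Finset.mem_insert.1 hq with rfl | hq <;>
      rcases Finset.mem_insert.1 hq' with rfl | hq'
      · exact absurd rfl hne
      · obtain ⟨p, hp, rfl⟩ := Finset.mem_image.1 hq'
        rw [hg.dist_eq]; exact hwS p hp
      · obtain ⟨p, hp, rfl⟩ := Finset.mem_image.1 hq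
        rw [hg.dist_eq, dist_comm]; exact hwS p hp
      · obtain ⟨p, hp, rfl⟩ := Finset.mem_image.1 hq
        obtain ⟨p', hp', rfl⟩ := Finset.mem_image.1 hq'
        rw [hg.dist_eq]; exact hSd p hp p' hp' (fun h => hne (by rw [h]))

theorem aux_many0 {M : Type*} [MetricSpace M] (hM : UltraDist M)
    (hsons : ∀ B ∈ NervOf M, B.Nontrivial → (SonOf B).Infinite)
    (b : M) (r : ℝ) (hr : 0 < r) (hb : r ∈ SpecAt b) (n : ℕ) :
    ∃ S : Finset M, S.card = n ∧ (∀ p ∈ S, dist b p ≤ r) ∧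
      ∀ p ∈ S, ∀ q ∈ S, p ≠ q → r ≤ dist p q := by
  classical
  induction n with
  | zero => exact ⟨∅, by simp, by simp, by simp⟩
  | succ n ih =>
    obtain ⟨S, hn, hS, hSd⟩ := ih
    obtain ⟨w, hw, hwS⟩ := aux_avoid0 hM hsons b r hr hb S
    have hni : w ∉ S := by
      intro h
      have := hwS w h
      rw [dist_self] at this
      linarith
    refine ⟨insert w S, by rw [Finset.card_insert_of_notMem hni, hn], ?_, ?_⟩
    · intro q hq
      rcases Finset.mem_insert.1 hq with rfl | hq
      · exact hw
      · exact hS q hq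
    · intro q hq q' hq' hne
      rcases Finset.mem_insert.1 hq with rfl | hq1 <;>
      rcases Finset.mem_insert.1 hq' with rfl | hq2
      · exact absurd rfl hne
      · exact hwS _ hq2
      · rw [dist_comm]; exact hwS _ hq1
      · exact hSd q hq1 q' hq2 hne

/-- Equivalence of two properties for countable ultrametric spaces whose
nontrivial nerve members have infinitely many sons. -/
theorem stmt_7 {M : Type*} [MetricSpace M] [Countable M] (hM : UltraDist M)
    (hsons : ∀ B ∈ NervOf M, B.Nontrivial → (SonOf B).Infinite) :
    ((∀ y y' : M, SpecAt y ⊆ SpecAt y' → ∃ g : M → M, Isometry g ∧ g y = y') ∧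
      (∀ B ∈ NervOf M, ∀ a ∈ B, ∀ b ∈ B, ∃ c ∈ B,
        SpecIn B a ⊆ SpecIn B c ∧ SpecIn B b ⊆ SpecIn B c)) ↔
    ((∀ y y' x : M, SpecAt y ⊆ SpecAt y' →
        ∃ x' : M, dist y' x' ≤ dist x y ∧ SpecAt x ⊆ SpecAt x') ∧
      (∀ B ∈ NervOf M, ∀ a ∈ B,
        ∃ f : ↥B → ↥(B ∩ {y | SpecAt a ⊆ SpecAt y}), Isometry f)) := by
  constructor
  · rintro ⟨h1, h2⟩
    have H : ∀ y y' x : M, SpecAt y ⊆ SpecAt y' →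
        ∃ x' : M, dist y' x' ≤ dist x y ∧ SpecAt x ⊆ SpecAt x' := by
      intro y y' x h
      obtain ⟨g, hg, rfl⟩ := h1 y y' h
      exact ⟨g x, by rw [hg.dist_eq, dist_comm], aux_specmono g hg x⟩
    refine ⟨H, ?_⟩
    rintro B ⟨b, r, hb, rfl⟩ a ha
    rw [Metric.mem_closedBall, dist_comm] at ha
    have hr : 0 ≤ r := by obtain ⟨x, rfl⟩ := hb; exact dist_nonneg
    obtain ⟨c, hc, hbc, hac⟩ := aux_dir hM h2 b r hb b a (by rwa [dist_self]) ha
    have K1 : ∀ y y' x : M, SpecAt y ⊆ SpecAt y' → SpecAt a ⊆ SpecAt y' →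
        ∃ x', dist y' x' ≤ dist x y ∧ SpecAt x ⊆ SpecAt x' ∧ SpecAt a ⊆ SpecAt x' := by
      intro y y' x h hq
      obtain ⟨x1, hx1, hs⟩ := H y y' x h
      have hd : dist x y ∈ SpecAt y' := h ⟨x, dist_comm _ _⟩
      obtain ⟨w, hw, hw1, hw2⟩ := aux_dir hM h2 y' (dist x y) hd y' x1
        (by rw [dist_self]; exact dist_nonneg) hx1
      exact ⟨w, hw, hs.trans hw2, hq.trans hw1⟩
    have K2 : ∀ (b c : M) (r : ℝ), 0 < r → r ∈ SpecAt b → dist b c ≤ r → ∀ F : Finset M,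
        ∃ c', dist b c' ≤ r ∧ SpecAt c ⊆ SpecAt c' ∧ ∀ z ∈ F, r ≤ dist c' z := by
      intro b c r hr hb hc F
      obtain ⟨S, hn, hS, hSd⟩ := aux_many hM hsons h1 h2 b c r hr hb hc (F.card + 1)
      obtain ⟨p, hp, hpF⟩ := aux_pigeon hM r S F (by omega) hSd
      exact ⟨p, (hS p hp).1, (hS p hp).2, hpF⟩
    obtain ⟨g, hg, hgb, hgQ⟩ := aux_ext hM (fun z => SpecAt a ⊆ SpecAt z)
      (fun c c' h h' => h'.trans h) K1 K2 b c hbc hac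
    refine ⟨fun x => ⟨g x.1, ?_, hgQ x.1⟩, ?_⟩
    · rw [Metric.mem_closedBall, dist_comm]
      refine aux_le hM hc ?_
      rw [← hgb, hg.dist_eq, dist_comm]
      exact x.2
    · exact Isometry.of_dist_eq (fun x y => hg.dist_eq x.1 y.1)
  · rintro ⟨h1, h2⟩
    constructor
    · intro y y' hyy
      have K1 : ∀ y y' x : M, SpecAt y ⊆ SpecAt y' → True →
        ∃ x', dist y' x' ≤ dist x y ∧ SpecAt x ⊆ SpecAt x' ∧ True := by
        intro y y' x h _
        obtain ⟨x', h, h'⟩ := h1 y y' x h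
        exact ⟨x', h, h', trivial⟩
      have K2 : ∀ (b c : M) (r : ℝ), 0 < r → r ∈ SpecAt b → dist b c ≤ r → ∀ F : Finset M,
        ∃ c', dist b c' ≤ r ∧ SpecAt c ⊆ SpecAt c' ∧ ∀ z ∈ F, r ≤ dist c' z := by
        classical
        intro b c r hr hb hc F
        obtain ⟨f, hf⟩ := h2 (Metric.closedBall b r) ⟨b, r, hb, rfl⟩ c
          (by rwa [Metric.mem_closedBall, dist_comm])
        obtain ⟨S, hn, hS, hSd⟩ := aux_many0 hM hsons b r hr hb (F.card + 1)
        have hS' : ∀ p ∈ S, p ∈ Metric.closedBall b r := fun p hp => by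
          rw [Metric.mem_closedBall, dist_comm]; exact hS p hp
        let φ : {p // p ∈ S} → M := fun p => (f ⟨p.1, hS' p.1 p.2⟩).1
        have hφ : ∀ p q, dist (φ p) (φ q) = dist p.1 q.1 := fun p q => hf.dist_eq _ _
        have hinj : Function.Injective φ := by
          intro p q h
          apply Subtype.ext
          rw [← dist_eq_zero, ← hφ, h, dist_self]
        obtain ⟨p, hp, hpF⟩ := aux_pigeon hM r (S.attach.image φ) F
          (by rw [Finset.card_image_of_injective _ hinj, Finset.card_attach]; omega) (by
            intro q hq q' hq' hne
            obtain ⟨p, -, rfl⟩ := Finset.mem_image.1 hq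
            obtain ⟨p', -, rfl⟩ := Finset.mem_image.1 hq'
            rw [hφ]
            exact hSd _ p.2 _ p'.2 (fun h => hne (by rw [Subtype.ext h])))
        obtain ⟨p, -, rfl⟩ := Finset.mem_image.1 hp
        have hm := (f ⟨p.1, hS' p.1 p.2⟩).2
        exact ⟨φ p, by rw [dist_comm]; exact hm.1, hm.2, hpF⟩
      obtain ⟨g, hg, hgb, -⟩ := aux_ext hM (fun _ => True) (fun _ _ _ _ => trivial) K1 K2
        y y' hyy trivial
      exact ⟨g, hg, hgb⟩
    · rintro B hB a ha b hb
      obtain ⟨f, hf⟩ := h2 B hB a ha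
      refine ⟨(f ⟨b, hb⟩).1, (f ⟨b, hb⟩).2.1, ?_, ?_⟩
      · rintro t ⟨x, hx, rfl⟩
        obtain ⟨z, hz⟩ := (f ⟨b, hb⟩).2.2 ⟨x, rfl⟩
        refine ⟨z, ?_, hz⟩
        have hcB := (f ⟨b, hb⟩).2.1
        obtain ⟨b0, r, -, rfl⟩ := hB
        rw [Metric.mem_closedBall] at *
        refine aux_le hM ?_ hcB
        rw [dist_comm, hz]
        exact aux_le hM ha (by rwa [dist_comm])
      · rintro t ⟨x, hx, rfl⟩
        exact ⟨(f ⟨x, hx⟩).1, (f ⟨x, hx⟩).2.1, hf.dist_eq _ _⟩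
end

section
/- Let M be an indivisible ultrametric space with more than one element. Then the diameter r := δ(M) of M is attained (there exist a, b ∈ M with d(a,b) = r, so that M ∈ Nerv(M)), and for each son B of M there are infinitely many sons B' of M such that the metric subspace on B embeds isometrically into the metric subspace on B'. -/
theorem aux_max {M : Type*} [MetricSpace M] [Nontrivial M]
    (hM : UltraDist M) (hind : Indiv M) :
    ∃ a b : M, ∀ x y : M, dist x y ≤ dist a b := by
  by_contra hcon
  push Not at hcon
  obtain ⟨a⟩ := (inferInstance : Nonempty M)
  have hno : ∀ x : M, ∃ y : M, dist a x < dist a y := by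
    intro x
    obtain ⟨z, w, hzw⟩ := hcon a x
    have h1 := hM z a w
    rw [dist_comm z a] at h1
    rcases le_max_iff.1 h1 with h | h
    · exact ⟨z, by linarith⟩
    · exact ⟨w, by linarith⟩
  let S : Set EReal := Set.range (fun x : M => ((dist a x : ℝ) : EReal))
  have hS : S.Nonempty := ⟨_, a, rfl⟩
  have hlub : IsLUB S (sSup S) := isLUB_sSup S
  have hnot : sSup S ∉ S := by
    rintro ⟨x, hx⟩
    obtain ⟨y, hy⟩ := hno x
    have h1 : ((dist a y : ℝ) : EReal) ≤ sSup S := hlub.1 ⟨y, rfl⟩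
    rw [← hx] at h1
    have h2 : dist a y ≤ dist a x := EReal.coe_le_coe_iff.1 h1
    linarith
  obtain ⟨u, hu, hlt, htend, hmem⟩ := hlub.exists_seq_strictMono_tendsto_of_notMem hnot hS
  choose p hp using hmem
  have hcof : ∀ z : M, ∃ N, ∀ n, N ≤ n → dist a z < dist a (p n) := by
    intro z
    have hz : ((dist a z : ℝ) : EReal) < sSup S :=
      lt_of_le_of_ne (hlub.1 ⟨z, rfl⟩) (fun h => hnot (h ▸ ⟨z, rfl⟩))
    obtain ⟨N, hN⟩ := Filter.eventually_atTop.1 (htend.eventually (lt_mem_nhds hz))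
    refine ⟨N, fun n hn => ?_⟩
    have h1 := hN n hn
    rw [← hp n] at h1
    exact EReal.coe_lt_coe_iff.1 h1
  have hkey : ∀ f : M → M, Isometry f → ∀ x, dist a (f a) < dist a x →
      dist a (f x) = dist a x := by
    intro f hf x hx
    have h0 := hf.dist_eq a x
    have h1 := hM a (f a) (f x)
    have h2 := hM (f a) a (f x)
    rw [dist_comm (f a) a] at h2
    rw [h0] at h1 h2
    rw [max_eq_right hx.le] at h1
    rcases le_max_iff.1 h2 with h | h
    · linarith
    · linarith
  have hA := hind {x | ∃ n, ((dist a x : ℝ) : EReal) = u (2 * n)}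
  rcases hA with ⟨f, hf, hfA⟩ | ⟨f, hf, hfA⟩
  · obtain ⟨N, hN⟩ := hcof (f a)
    have h1 := hkey f hf (p (2 * N + 1)) (hN _ (by omega))
    obtain ⟨n, hn⟩ := hfA (p (2 * N + 1))
    rw [h1] at hn
    have h2 := hu.injective ((hp (2 * N + 1)).symm.trans hn)
    omega
  · obtain ⟨N, hN⟩ := hcof (f a)
    have h1 := hkey f hf (p (2 * N)) (hN _ (by omega))
    apply hfA (p (2 * N))
    refine ⟨N, ?_⟩
    rw [h1]
    exact hp (2 * N)

theorem aux_ball_s8 {M : Type*} [MetricSpace M] (hM : UltraDist M) {r : ℝ} (hr : 0 < r) (a b : M) :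
    Metric.ball a r = Metric.ball b r ↔ dist a b < r := by
  constructor
  · intro h
    have : a ∈ Metric.ball b r := h ▸ Metric.mem_ball_self hr
    exact this
  · intro h
    ext x
    simp only [Metric.mem_ball]
    constructor
    · intro hx
      exact lt_of_le_of_lt (hM x a b) (max_lt hx h)
    · intro hx
      exact lt_of_le_of_lt (hM x b a) (max_lt hx (by rwa [dist_comm]))

theorem aux_card {M : Type*} [MetricSpace M] [Nontrivial M] (hM : UltraDist M) {r : ℝ} (hr : 0 < r)
    (f : M → M) (hf : Isometry f) (T : Set (Set M)) (hT : T.Finite)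
    (h : ∀ x, Metric.ball (f x) r ∈ T) :
    (Set.range (fun a : M => Metric.ball a r)).Finite ∧
    (Set.range (fun a : M => Metric.ball a r)).ncard ≤ T.ncard := by
  let β : M → Set M := fun a => Metric.ball a r
  let g : Set M → Set M := fun s => β (f (Function.invFun β s))
  have hmaps : ∀ s ∈ Set.range β, g s ∈ T := fun s _ => h _
  have hinj : Set.InjOn g (Set.range β) := by
    intro s hs t ht hst
    have h1 : dist (f (Function.invFun β s)) (f (Function.invFun β t)) < r :=
      (aux_ball_s8 hM hr _ _).1 hst
    rw [hf.dist_eq] at h1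
    have h2 : β (Function.invFun β s) = β (Function.invFun β t) := (aux_ball_s8 hM hr _ _).2 h1
    rwa [Function.invFun_eq hs, Function.invFun_eq ht] at h2
  exact ⟨Set.Finite.of_injOn hmaps hinj hT, Set.ncard_le_ncard_of_injOn g hmaps hinj hT⟩

/-- In an indivisible ultrametric space with more than one element the
diameter is attained, and each son of the space embeds into infinitely many sons. -/
theorem stmt_8 {M : Type*} [MetricSpace M] [Nontrivial M]
    (hM : UltraDist M) (hind : Indiv M) :
    (∃ a b : M, dist a b = Metric.diam (Set.univ : Set M)) ∧
    ∀ B ∈ SonOf (Set.univ : Set M),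
      {B' | B' ∈ SonOf (Set.univ : Set M) ∧ ∃ f : ↥B → ↥B', Isometry f}.Infinite := by
  obtain ⟨a, b, hab⟩ := aux_max hM hind
  have hdiam : Metric.diam (Set.univ : Set M) = dist a b := by
    apply le_antisymm
    · exact Metric.diam_le_of_forall_dist_le dist_nonneg (fun x _ y _ => hab x y)
    · exact Metric.dist_le_diam_of_mem
        (Metric.isBounded_iff.2 ⟨dist a b, fun x _ y _ => hab x y⟩) trivial trivial
  refine ⟨⟨a, b, hdiam.symm⟩, ?_⟩
  have hr : 0 < dist a b := by
    obtain ⟨x, y, hxy⟩ := exists_pair_ne M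
    exact lt_of_lt_of_le (dist_pos.2 hxy) (hab x y)
  unfold SonOf
  rw [hdiam]
  generalize hrr : dist a b = r at *
  have hinf : (Set.range (fun x : M => Metric.ball x r)).Infinite := by
    intro hfin
    rcases hind (Metric.ball a r) with ⟨f, hf, hfA⟩ | ⟨f, hf, hfA⟩
    · have h1 : dist (f a) (f b) < r := by
        refine lt_of_le_of_lt (hM (f a) a (f b)) (max_lt (hfA a) ?_)
        rw [dist_comm]; exact hfA b
      rw [hf.dist_eq] at h1
      linarith
    · have h1 := aux_card hM hr f hf
        (Set.range (fun x : M => Metric.ball x r) \ {Metric.ball a r}) hfin.diff (by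
          intro x
          refine ⟨⟨f x, rfl⟩, fun h => hfA x ?_⟩
          have h : Metric.ball (f x) r = Metric.ball a r := h
          rw [← h]
          exact Metric.mem_ball_self hr)
      have h2 := Set.ncard_diff_singleton_lt_of_mem
        (s := Set.range (fun x : M => Metric.ball x r)) (a := Metric.ball a r) ⟨a, rfl⟩ hfin
      omega
  rintro B ⟨c, -, rfl⟩ hF
  rcases hind (⋃₀ {B' | B' ∈ {S | ∃ a ∈ (Set.univ : Set M), S = Metric.ball a r} ∧
      ∃ f : ↥(Metric.ball c r) → ↥B', Isometry f}) with ⟨f, hf, hfA⟩ | ⟨f, hf, hfA⟩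
  · refine hinf (aux_card hM hr f hf _ hF ?_).1
    intro x
    obtain ⟨S, ⟨⟨d, hd, rfl⟩, g⟩, hx⟩ := hfA x
    have h1 : Metric.ball (f x) r = Metric.ball d r := (aux_ball_s8 hM hr _ _).2 hx
    rw [h1]
    exact ⟨⟨d, hd, rfl⟩, g⟩
  · apply hfA c
    refine ⟨Metric.ball (f c) r, ⟨⟨f c, trivial, rfl⟩, ?_⟩, Metric.mem_ball_self hr⟩
    refine ⟨fun x => ⟨f x, ?_⟩, ?_⟩
    · have h1 : dist (x : M) c < r := x.2
      rw [Metric.mem_ball, hf.dist_eq]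
      exact h1
    · intro x y
      exact hf x y
end

section
/- Let M be an indivisible metric space. Then for every x ∈ M, M embeds isometrically into the metric subspace induced on M(x) := {y ∈ M : Spec(M,x) ⊆ Spec(M,y)}. -/
/-- An indivisible metric space embeds isometrically into the subspace
of points whose spectrum contains that of any fixed point x. -/
theorem stmt_9 {M : Type*} [MetricSpace M] (hind : Indiv M) :
    ∀ x : M, ∃ f : M → M, Isometry f ∧ ∀ y : M, f y ∈ {z | SpecAt x ⊆ SpecAt z} := by
  intro x
  rcases hind {z | SpecAt x ⊆ SpecAt z} with h | ⟨f, hf, h⟩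
  · exact h
  · exfalso
    apply h x
    rintro r ⟨y, rfl⟩
    exact ⟨f y, hf.dist_eq x y⟩
end

section
/- Let M be a countable ultrametric space satisfying the infinite spec-extension property. Then for each non-trivial B ∈ Nerv(M) and every finite set 𝒞 of sons of B, the metric subspace on B embeds isometrically into the metric subspace on B \ ∪𝒞. -/
theorem aux_pick {M : Type*} [MetricSpace M] (hM : UltraDist M) (ρ : ℝ) (S : Set M)
    (hS : S.Infinite) (hd : ∀ z ∈ S, ∀ z' ∈ S, z ≠ z' → dist z z' = ρ) (T : Finset M) :
    ∃ z ∈ S, ∀ t ∈ T, ρ ≤ dist z t := by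
  classical
  by_contra hcon
  push Not at hcon
  choose! g hg hg' using hcon
  obtain ⟨z, hz, z', hz', hne, heq⟩ :=
    hS.exists_ne_map_eq_of_mapsTo (f := g) (t := (T : Set M)) (fun z hz => hg z hz) T.finite_toSet
  have h1 := hg' z hz
  have h2 := hg' z' hz'
  rw [← heq, dist_comm] at h2
  have h3 := hM z (g z) z'
  rw [hd z hz z' hz' hne] at h3
  exact absurd h3 (not_le.mpr (max_lt h1 h2))

def GoodRel {M : Type*} [MetricSpace M] (B : Set M) (r : ℝ) (T : Finset M)
    (s : Finset (M × M)) : Prop :=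
  (∀ p ∈ s, p.2 ∈ B ∧ (∀ t ∈ T, r ≤ dist p.2 t) ∧ SpecAt p.1 ⊆ SpecAt p.2 ∧ p.1 ∈ B) ∧
  ∀ p ∈ s, ∀ q ∈ s, dist p.2 q.2 = dist p.1 q.1

theorem aux_point {M : Type*} [MetricSpace M]
    (hM : UltraDist M) (h : InfSpecExt M) (B : Set M) (r : ℝ)
    (hle : ∀ x ∈ B, ∀ y, y ∈ B ↔ dist x y ≤ r) (hr : 0 < r)
    (hatt : ∀ x ∈ B, ∃ y ∈ B, dist x y = r) (T : Finset M)
    (s : Finset (M × M)) (hs : GoodRel B r T s) (x : M) (hx : x ∈ B) :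
    ∃ y, y ∈ B ∧ (∀ t ∈ T, r ≤ dist y t) ∧ SpecAt x ⊆ SpecAt y ∧
      ∀ p ∈ s, dist y p.2 = dist x p.1 := by
  classical
  obtain ⟨hs1, hs2⟩ := hs
  rcases s.eq_empty_or_nonempty with rfl | hne
  · obtain ⟨c, hc, hxc⟩ := hatt x hx
    have hxc' : x ≠ c := by rintro rfl; simp at hxc; linarith
    obtain ⟨S, hS, h1, h2⟩ := h x c c hxc' subset_rfl
    obtain ⟨z, hz, hzT⟩ := aux_pick hM _ S hS h2 T
    rw [hxc] at hzT
    refine ⟨z, (hle c hc z).2 ?_, hzT, (h1 z hz).2, by simp⟩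
    rw [(h1 z hz).1, hxc]
  · obtain ⟨p, hp, hmin⟩ := s.exists_min_image (fun p => dist x p.1) hne
    obtain ⟨hpB, hpT, hpS, hp1⟩ := hs1 p hp
    by_cases hxp : x = p.1
    · refine ⟨p.2, hpB, hpT, hxp ▸ hpS, fun q hq => ?_⟩
      rw [hs2 p hp q hq, hxp]
    · obtain ⟨S, hS, h1, h2⟩ := h x p.1 p.2 hxp hpS
      obtain ⟨z, hz, hzT⟩ := aux_pick hM _ S hS h2 (T ∪ s.image Prod.snd)
      obtain ⟨hz1, hz2⟩ := h1 z hz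
      have hρ : dist x p.1 ≤ r := (hle x hx p.1).1 hp1
      refine ⟨z, (hle p.2 hpB z).2 (hz1 ▸ hρ), fun t ht => ?_, hz2, fun q hq => ?_⟩
      · have a1 := hzT t (Finset.mem_union_left _ ht)
        have a2 := hpT t ht
        rcases hρ.eq_or_lt with e | e
        · linarith
        · have a3 := hM p.2 z t
          rcases le_max_iff.1 a3 with a4 | a4 <;> linarith
      · have a1 := hzT q.2 (Finset.mem_union_right _ (Finset.mem_image_of_mem _ hq))
        have a2 := hmin q hq
        have a3 := hs2 p hp q hq
        have b1 := hM z p.2 q.2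
        have b2 := hM p.2 z q.2
        have b3 := hM x p.1 q.1
        have b4 := hM p.1 x q.1
        rw [dist_comm z p.2] at b1
        rw [dist_comm p.1 x] at b4
        simp only [le_max_iff] at b1 b2 b3 b4
        apply le_antisymm <;> grind

theorem stmt_11 {M : Type*} [MetricSpace M] [Countable M]
    (hM : UltraDist M) (h : InfSpecExt M) :
    ∀ B ∈ NervOf M, B.Nontrivial → ∀ 𝒞 : Set (Set M), 𝒞 ⊆ SonOf B → 𝒞.Finite →
      ∃ f : ↥B → ↥(B \ ⋃₀ 𝒞), Isometry f := by
  classical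
  rintro B ⟨a, r, ⟨b, hab⟩, hB⟩ hnt 𝒞 hC hfin
  have hr0 : 0 ≤ r := hab ▸ dist_nonneg
  have haB : a ∈ B := by rw [hB]; simpa using hr0
  have hbB : b ∈ B := by rw [hB, Metric.mem_closedBall, dist_comm, hab]
  have hle : ∀ x ∈ B, ∀ y, y ∈ B ↔ dist x y ≤ r := by
    intro x hx y
    rw [hB, Metric.mem_closedBall] at hx ⊢
    have h1 := hM x a y
    have h2 := hM y x a
    rw [dist_comm a y] at h1
    rw [dist_comm y x] at h2
    simp only [le_max_iff] at h1 h2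
    constructor <;> intro h3 <;> grind
  have hr : 0 < r := by
    obtain ⟨x, hx, y, hy, hxy⟩ := hnt
    exact (dist_pos.2 hxy).trans_le ((hle x hx y).1 hy)
  have hatt : ∀ x ∈ B, ∃ y ∈ B, dist x y = r := by
    intro x hx
    have h1 := (hle x hx a).1 haB
    have h2 := (hle x hx b).1 hbB
    have h3 := hM a x b
    rw [hab, dist_comm a x, le_max_iff] at h3
    rcases h3 with h3 | h3
    · exact ⟨a, haB, le_antisymm h1 h3⟩
    · exact ⟨b, hbB, le_antisymm h2 h3⟩
  have hdiam : Metric.diam B = r := by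
    apply le_antisymm
    · exact Metric.diam_le_of_forall_dist_le hr0 (fun x hx y hy => (hle x hx y).1 hy)
    · rw [← hab]
      refine Metric.dist_le_diam_of_mem ?_ haB hbB
      rw [hB]; exact Metric.isBounded_closedBall
  have hC2 : ∀ C ∈ 𝒞, ∃ x, x ∈ B ∧ C = Metric.ball x (Metric.diam B) := fun C hCm => hC hCm
  haveI : Nonempty M := ⟨a⟩
  choose! c hc hc' using hC2
  let T : Finset M := hfin.toFinset.image c
  have step : ∀ s : {s : Finset (M × M) // GoodRel B r T s}, ∀ x : B,
      ∃ s' : {s : Finset (M × M) // GoodRel B r T s}, s.1 ⊆ s'.1 ∧ ∃ y, (x.1, y) ∈ s'.1 := by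
    rintro ⟨s, hs⟩ ⟨x, hx⟩
    obtain ⟨y, y1, y2, y3, y4⟩ := aux_point hM h B r hle hr hatt T s hs x hx
    refine ⟨⟨insert (x, y) s, ?_, ?_⟩, Finset.subset_insert _ _, y, Finset.mem_insert_self _ _⟩
    · intro p hp
      rcases Finset.mem_insert.1 hp with rfl | hp
      · exact ⟨y1, y2, y3, hx⟩
      · exact hs.1 p hp
    · intro p hp q hq
      rcases Finset.mem_insert.1 hp with rfl | hp <;> rcases Finset.mem_insert.1 hq with rfl | hq
      · simp
      · exact y4 q hq
      · have := y4 p hp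
        rw [dist_comm p.2, dist_comm p.1]; exact this
      · exact hs.2 p hp q hq
  choose nxt hn1 hn2 using step
  haveI : Nonempty B := ⟨⟨a, haB⟩⟩
  obtain ⟨e, he⟩ := exists_surjective_nat B
  let s0 : {s : Finset (M × M) // GoodRel B r T s} := ⟨∅, by simp [GoodRel]⟩
  let F : ℕ → {s : Finset (M × M) // GoodRel B r T s} :=
    fun n => Nat.rec s0 (fun n s => nxt s (e n)) n
  have hmono : Monotone (fun n => (F n).1) :=
    monotone_nat_of_le_succ (fun n => hn1 (F n) (e n))
  have hex : ∀ x : B, ∃ y n, (x.1, y) ∈ (F n).1 := by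
    intro x
    obtain ⟨n, rfl⟩ := he x
    obtain ⟨y, hy⟩ := hn2 (F n) (e n)
    exact ⟨y, n + 1, hy⟩
  choose g N hg using hex
  refine ⟨fun x => ⟨g x, ?_, ?_⟩, ?_⟩
  · exact ((F (N x)).2.1 _ (hg x)).1
  · rintro ⟨C, hCm, hgC⟩
    have h1 := ((F (N x)).2.1 _ (hg x)).2.1 (c C)
      (Finset.mem_image_of_mem _ (hfin.mem_toFinset.2 hCm))
    rw [hc' C hCm, Metric.mem_ball, hdiam] at hgC
    exact absurd h1 (not_le.mpr hgC)
  · refine Isometry.of_dist_eq fun x y => ?_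
    have hx := hmono (le_max_left (N x) (N y)) (hg x)
    have hy := hmono (le_max_right (N x) (N y)) (hg y)
    exact (F (max (N x) (N y))).2.2 _ hx _ hy
end

section
/- Let λ be a linearly ordered set and w : λ → ℝ a strictly antitone function with w(μ) > 0 for all μ ∈ λ. On the set M of finitely supported functions f : λ → ℕ, define d(f,g) := 0 if f = g, and otherwise d(f,g) := w(μ) where μ is the least element of the (finite, nonempty) set {ν ∈ λ : f(ν) ≠ g(ν)}. Then d is an ultrametric distance on M (d is symmetric, vanishes exactly on the diagonal, and d(f,h) ≤ max(d(f,g), d(g,h)) for all f,g,h), the spectrum of (M,d) equals w(λ) ∪ {0}, and pointwise addition is compatible with d: d(h+f, h+g) = d(f,g) for all f,g,h ∈ M. -/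
/-- The valuation distance on finitely supported functions λ → ℕ is an
ultrametric distance, its spectrum is w(λ) ∪ {0}, and pointwise addition is
compatible with it. Here d is any function satisfying the defining clauses. -/
theorem stmt_12 {ι : Type*} [LinearOrder ι] (w : ι → ℝ)
    (hw : StrictAnti w) (hpos : ∀ μ, 0 < w μ)
    (d : (ι →₀ ℕ) → (ι →₀ ℕ) → ℝ)
    (hdiag : ∀ f, d f f = 0)
    (hdw : ∀ f g : ι →₀ ℕ, ∀ μ : ι, IsLeast {ν : ι | f ν ≠ g ν} μ → d f g = w μ) :
    (∀ f g : ι →₀ ℕ, d f g = d g f) ∧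
    (∀ f g : ι →₀ ℕ, d f g = 0 ↔ f = g) ∧
    (∀ f g h : ι →₀ ℕ, d f h ≤ max (d f g) (d g h)) ∧
    {r : ℝ | ∃ f g : ι →₀ ℕ, d f g = r} = Set.range w ∪ {0} ∧
    (∀ f g h : ι →₀ ℕ, d (h + f) (h + g) = d f g) := by
  have ex : ∀ f g : ι →₀ ℕ, f ≠ g → ∃ μ, IsLeast {ν : ι | f ν ≠ g ν} μ := by
    intro f g hfg
    have hfin : {ν : ι | f ν ≠ g ν}.Finite := by
      refine (f.support ∪ g.support).finite_toSet.subset ?_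
      intro ν hν
      simp only [Set.mem_setOf_eq] at hν
      simp only [Finset.coe_union, Set.mem_union, Finset.mem_coe, Finsupp.mem_support_iff]
      by_contra! hc
      exact hν (hc.1.trans hc.2.symm)
    have hne : hfin.toFinset.Nonempty := by
      obtain ⟨ν, hν⟩ := Finsupp.ne_iff.mp hfg
      exact ⟨ν, by simpa using hν⟩
    have := hfin.toFinset.isLeast_min' hne
    rw [Set.Finite.coe_toFinset] at this
    exact ⟨_, this⟩
  have nn : ∀ f g : ι →₀ ℕ, 0 ≤ d f g := by
    intro f g
    by_cases hfg : f = g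
    · subst hfg; rw [hdiag]
    · obtain ⟨μ, hμ⟩ := ex f g hfg
      rw [hdw f g μ hμ]; exact (hpos μ).le
  have lb : ∀ (f g : ι →₀ ℕ) (μ : ι), f μ ≠ g μ → w μ ≤ d f g := by
    intro f g μ h
    obtain ⟨ν, hν⟩ := ex f g (fun e => h (by rw [e]))
    rw [hdw f g ν hν]
    exact hw.antitone (hν.2 h)
  refine ⟨?_, ?_, ?_, ?_, ?_⟩
  · intro f g
    by_cases hfg : f = g
    · rw [hfg]
    · obtain ⟨μ, hμ⟩ := ex f g hfg
      rw [hdw f g μ hμ, hdw g f μ]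
      simpa only [ne_comm] using hμ
  · intro f g
    refine ⟨fun h => ?_, fun h => by rw [h, hdiag]⟩
    by_contra hfg
    obtain ⟨μ, hμ⟩ := ex f g hfg
    rw [hdw f g μ hμ] at h
    exact (hpos μ).ne' h
  · intro f g h
    by_cases hfh : f = h
    · rw [hfh, hdiag]; exact le_max_of_le_left (nn _ _)
    · obtain ⟨μ, hμ⟩ := ex f h hfh
      rw [hdw f h μ hμ]
      by_cases h1 : f μ = g μ
      · exact le_max_of_le_right (lb g h μ (fun e => hμ.1 (h1.trans e)))
      · exact le_max_of_le_left (lb f g μ h1)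
  · ext r
    constructor
    · rintro ⟨f, g, rfl⟩
      by_cases hfg : f = g
      · right; rw [hfg, hdiag]; rfl
      · obtain ⟨μ, hμ⟩ := ex f g hfg
        left; exact ⟨μ, (hdw f g μ hμ).symm⟩
    · rintro (⟨μ, rfl⟩ | hr)
      · refine ⟨Finsupp.single μ 1, 0, hdw _ _ μ ⟨by simp, ?_⟩⟩
        intro ν hν
        by_contra hc
        apply hν
        rw [Finsupp.single_eq_of_ne (fun e => hc (by rw [e]))]
        rfl
      · exact ⟨0, 0, (hdiag 0).trans hr.symm⟩
  · intro f g h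
    by_cases hfg : f = g
    · rw [hfg, hdiag, hdiag]
    · obtain ⟨μ, hμ⟩ := ex f g hfg
      rw [hdw f g μ hμ, hdw (h + f) (h + g) μ]
      simpa only [Finsupp.add_apply, ne_eq, add_right_inj] using hμ
end

section
/- Let λ be a linearly ordered set and w : λ → ℝ strictly antitone with w(μ) > 0 for all μ, and let M be the set of finitely supported functions f : λ → ℕ with the ultrametric distance d(f,g) := w(least ν with f(ν) ≠ g(ν)) for f ≠ g and d(f,f) := 0. Let X ⊆ M and let X* be the set of all finite sums of members of X (including the empty sum 0). If there is no infinite sequence of sets of the form C_n = {g ∈ X : d(f_n, g) ≤ d(f_n, f'_n)} with f_n, f'_n ∈ X and C_n ⊊ C_{n+1} for all n, then there is no infinite sequence of sets of the form D_n = {g ∈ X* : d(f_n, g) ≤ d(f_n, f'_n)} with f_n, f'_n ∈ X* and D_n ⊊ D_{n+1} for all n. (Equivalently: if the meet-tree generated by X is well-founded, then the meet-tree generated by X* is well-founded.) -/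
theorem aux_le_of_mem {ι : Type*} (X : Set (ι →₀ ℕ)) (μ : ι) (g : ι →₀ ℕ)
    (hg : g ∈ AddSubmonoid.closure X) : g μ ≠ 0 → ∃ y ∈ X, y ≤ g ∧ y μ ≠ 0 := by
  induction hg using AddSubmonoid.closure_induction with
  | mem x hx => exact fun h => ⟨x, hx, le_rfl, h⟩
  | zero => intro h; simp at h
  | add a b _ _ iha ihb =>
    intro h
    by_cases ha : a μ = 0
    · have hb : b μ ≠ 0 := by
        intro hb; apply h; simp [ha, hb]
      obtain ⟨y, hy, hle, hne⟩ := ihb hb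
      exact ⟨y, hy, hle.trans le_add_self, hne⟩
    · obtain ⟨y, hy, hle, hne⟩ := iha ha
      exact ⟨y, hy, hle.trans le_self_add, hne⟩

/-- If the tree of balls of X (balls with realized radii, ordered by
reverse inclusion) is well-founded, so is that of the set X* of finite sums of
members of X. -/
theorem stmt_13 {ι : Type*} [LinearOrder ι] (w : ι → ℝ)
    (hw : StrictAnti w) (hpos : ∀ μ, 0 < w μ)
    (d : (ι →₀ ℕ) → (ι →₀ ℕ) → ℝ)
    (hdiag : ∀ f, d f f = 0)
    (hdw : ∀ f g : ι →₀ ℕ, ∀ μ : ι, IsLeast {ν : ι | f ν ≠ g ν} μ → d f g = w μ)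
    (X : Set (ι →₀ ℕ))
    (hX : ¬ ∃ f f' : ℕ → ι →₀ ℕ, (∀ n, f n ∈ X) ∧ (∀ n, f' n ∈ X) ∧
      ∀ n, {g ∈ X | d (f n) g ≤ d (f n) (f' n)} ⊂
            {g ∈ X | d (f (n + 1)) g ≤ d (f (n + 1)) (f' (n + 1))}) :
    ¬ ∃ f f' : ℕ → ι →₀ ℕ,
      (∀ n, f n ∈ (AddSubmonoid.closure X : Set (ι →₀ ℕ))) ∧
      (∀ n, f' n ∈ (AddSubmonoid.closure X : Set (ι →₀ ℕ))) ∧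
      ∀ n, {g ∈ (AddSubmonoid.closure X : Set (ι →₀ ℕ)) | d (f n) g ≤ d (f n) (f' n)} ⊂
            {g ∈ (AddSubmonoid.closure X : Set (ι →₀ ℕ)) |
              d (f (n + 1)) g ≤ d (f (n + 1)) (f' (n + 1))} := by
  rintro ⟨f, f', hf, hf', hD⟩
  apply hX
  have hleast : ∀ f g : ι →₀ ℕ, f ≠ g → ∃ μ, IsLeast {ν : ι | f ν ≠ g ν} μ := by
    intro f g hfg
    have hfin : {ν : ι | f ν ≠ g ν}.Finite := by
      apply (f.support ∪ g.support).finite_toSet.subset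
      intro ν hν
      simp only [Set.mem_ofPred_eq] at hν
      simp only [Finset.coe_union, Set.mem_union, Finset.mem_coe, Finsupp.mem_support_iff]
      by_contra! h
      exact hν (h.1.trans h.2.symm)
    have hne : {ν : ι | f ν ≠ g ν}.Nonempty := by
      by_contra! h
      apply hfg
      ext ν
      by_contra hν
      have : ν ∈ {ν : ι | f ν ≠ g ν} := hν
      rw [h] at this
      exact this
    obtain ⟨μ, hμ⟩ := hfin.exists_minimal hne
    refine ⟨μ, hμ.1, fun ν hν => ?_⟩
    rcases le_total μ ν with h | h
    · exact h
    · exact hμ.2 hν h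
  have hnn : ∀ f g, 0 ≤ d f g := by
    intro f g
    by_cases h : f = g
    · rw [h, hdiag]
    · obtain ⟨μ, hμ⟩ := hleast f g h
      rw [hdw f g μ hμ]; exact (hpos μ).le
  have hle : ∀ f g μ, f μ ≠ g μ → w μ ≤ d f g := by
    intro f g μ h
    obtain ⟨ν, hν⟩ := hleast f g (fun e => h (by rw [e]))
    rw [hdw f g ν hν]
    exact hw.antitone (hν.2 h)
  have hult : ∀ f g h, d f h ≤ max (d f g) (d g h) := by
    intro f g h
    by_cases e : f = h
    · rw [e, hdiag]; exact le_max_of_le_left (hnn _ _)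
    obtain ⟨μ, hμ⟩ := hleast f h e
    rw [hdw f h μ hμ]
    by_cases e1 : f μ = g μ
    · exact le_max_of_le_right (hle _ _ _ (fun e2 => hμ.1 (e1.trans e2)))
    · exact le_max_of_le_left (hle _ _ _ e1)
  have hsymm : ∀ f g, d f g = d g f := by
    intro f g
    by_cases e : f = g
    · rw [e]
    obtain ⟨μ, hμ⟩ := hleast f g e
    rw [hdw f g μ hμ, hdw g f μ]
    simpa only [ne_comm] using hμ
  have hf0 : ∀ n, d (f n) (f 0) ≤ d (f n) (f' n) := by
    intro n
    have : f 0 ∈ {g ∈ (AddSubmonoid.closure X : Set (ι →₀ ℕ)) | d (f n) g ≤ d (f n) (f' n)} := by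
      induction n with
      | zero => exact ⟨hf 0, by rw [hdiag]; exact hnn _ _⟩
      | succ n ih => exact (hD n).1 ih
    exact this.2
  have hg : ∀ n, ∃ g ∈ AddSubmonoid.closure X, d (f n) (f' n) < d (f 0) g ∧
      d (f 0) g ≤ d (f (n+1)) (f' (n+1)) := by
    intro n
    obtain ⟨g, hg1, hg2⟩ := Set.exists_of_ssubset (hD n)
    refine ⟨g, hg1.1, ?_, ?_⟩
    · by_contra! h
      exact hg2 ⟨hg1.1, (hult _ (f 0) _).trans (max_le (hf0 n) h)⟩
    · refine (hult _ (f (n+1)) _).trans (max_le ?_ hg1.2)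
      rw [hsymm]; exact hf0 _
  choose g hgX hg1 hg2 using hg
  have hμ : ∀ n, ∃ μ, IsLeast {ν : ι | f 0 ν ≠ g n ν} μ := by
    intro n
    apply hleast
    intro e
    have := hg1 n
    rw [← e, hdiag] at this
    exact absurd (hnn _ _) (not_le.2 this)
  choose μ hμ using hμ
  have hanti : StrictAnti μ := by
    apply strictAnti_nat_of_succ_lt
    intro n
    rw [← hw.lt_iff_gt, ← hdw _ _ _ (hμ n), ← hdw _ _ _ (hμ (n+1))]
    exact (hg2 n).trans_lt (hg1 (n+1))
  -- drop the indices in the support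
  have hfin : {n | μ n ∈ (f 0).support}.Finite :=
    (f 0).support.finite_toSet.preimage hanti.injective.injOn
  obtain ⟨N, hN⟩ := hfin.bddAbove
  have hzero : ∀ n, N < n → f 0 (μ n) = 0 := by
    intro n hn
    by_contra h
    exact absurd (hN (Finsupp.mem_support_iff.2 h : n ∈ {n | μ n ∈ (f 0).support})) (not_le.2 hn)
  have hy : ∀ n, ∃ y ∈ X, y ≤ g (N+1+n) ∧ y (μ (N+1+n)) ≠ 0 := by
    intro n
    apply aux_le_of_mem X _ _ (hgX _)
    have := (hμ (N+1+n)).1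
    simp only [Set.mem_ofPred_eq] at this
    rw [hzero _ (by omega)] at this
    exact this.symm
  choose y hyX hyg hy0 using hy
  have hfil : ∀ n, (y n).filter (fun ν => ν < μ (N+1+n)) ∈ Set.Icc 0 (f 0) := by
    intro n
    refine ⟨fun ν => Nat.zero_le _, fun ν => ?_⟩
    by_cases h : ν < μ (N+1+n)
    · rw [Finsupp.filter_apply_pos (fun ν => ν < μ (N+1+n)) _ h]
      have : f 0 ν = g (N+1+n) ν := by
        by_contra hc
        exact absurd ((hμ (N+1+n)).2 hc) (not_le.2 h)
      rw [this]
      exact hyg n ν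
    · rw [Finsupp.filter_apply_neg (fun ν => ν < μ (N+1+n)) _ h]; exact Nat.zero_le _
  have : Finite (Set.Icc 0 (f 0)) := Set.finite_Icc 0 (f 0)
  obtain ⟨h, hinf⟩ := Finite.exists_infinite_fiber
    (fun n => (⟨_, hfil n⟩ : Set.Icc 0 (f 0)))
  have hinf' := Set.infinite_coe_iff.1 hinf
  obtain ⟨φ, hφ, hφS⟩ : ∃ φ : ℕ → ℕ, StrictMono φ ∧
      ∀ n, (y (φ n)).filter (fun ν => ν < μ (N+1+φ n)) = (h : ι →₀ ℕ) := by
    refine ⟨Nat.nth _, Nat.nth_strictMono hinf', fun n => ?_⟩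
    have := Nat.nth_mem_of_infinite hinf' n
    exact congrArg Subtype.val this
  have key : ∀ n, IsLeast {ν | y (φ 0) ν ≠ y (φ (n+1)) ν} (μ (N+1+φ (n+1))) := by
    intro n
    have hlt : μ (N+1+φ (n+1)) < μ (N+1+φ 0) := by
      apply hanti
      have := hφ (Nat.succ_pos n)
      simp only [Nat.succ_eq_add_one] at this
      omega
    have e : ∀ m ν, ν < μ (N+1+φ m) → y (φ m) ν = (h : ι →₀ ℕ) ν := by
      intro m ν hν
      rw [← hφS m, Finsupp.filter_apply_pos (fun ν => ν < μ (N+1+φ m)) _ hν]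
    constructor
    · have h1 : y (φ 0) (μ (N+1+φ (n+1))) = 0 := by
        rw [e 0 _ hlt, ← hφS (n+1), Finsupp.filter_apply_neg (fun ν => ν < μ (N+1+φ (n+1))) _ (lt_irrefl _)]
      simp only [Set.mem_ofPred_eq]
      rw [h1]
      exact (hy0 _).symm
    · intro ν hν
      by_contra! hc
      exact hν ((e 0 ν (hc.trans hlt)).trans (e (n+1) ν hc).symm)
  refine ⟨fun _ => y (φ 0), fun n => y (φ (n+1)), fun _ => hyX _, fun _ => hyX _, fun n => ?_⟩
  have hlt : d (y (φ 0)) (y (φ (n+1))) < d (y (φ 0)) (y (φ (n+1+1))) := by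
    rw [hdw _ _ _ (key n), hdw _ _ _ (key (n+1))]
    apply hw
    apply hanti
    have := hφ (Nat.lt_succ_self (n+1))
    simp only [Nat.succ_eq_add_one] at this
    omega
  refine ⟨fun a ha => ⟨ha.1, ha.2.trans hlt.le⟩, fun hs => ?_⟩
  have hm := hs (⟨hyX (φ (n+1+1)), le_rfl⟩ : y (φ (n+1+1)) ∈ {g ∈ X | d (y (φ 0)) g ≤ d (y (φ 0)) (y (φ (n+1+1)))})
  exact absurd hm.2 (not_le.2 hlt)
end

section
/- Let M be an ultrametric space endowed with a compatible binary operation +, whose diameter r := δ(M) > 0 is attained, and suppose M has infinitely many sons (infinitely many distinct sets of the form {x ∈ M : d(a,x) < r}, a ∈ M). Then for each son B of M there are infinitely many sons B' of M such that the metric subspace on B embeds isometrically into the metric subspace on B'. -/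
/-- In an ultrametric space with a compatible operation whose positive
diameter is attained and which has infinitely many sons, each son embeds
isometrically into infinitely many sons. -/
theorem stmt_19 {M : Type*} [MetricSpace M] (hM : UltraDist M)
    (op : M → M → M)
    (hl : ∀ x y z : M, dist (op z x) (op z y) = dist x y)
    (hr : ∀ x y z : M, dist (op x z) (op y z) = dist x y)
    (hpos : 0 < Metric.diam (Set.univ : Set M))
    (hatt : ∃ x y : M, dist x y = Metric.diam (Set.univ : Set M))
    (hsons : (SonOf (Set.univ : Set M)).Infinite) :
    ∀ B ∈ SonOf (Set.univ : Set M),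
      {B' | B' ∈ SonOf (Set.univ : Set M) ∧ ∃ f : ↥B → ↥B', Isometry f}.Infinite := by
  rintro B ⟨a, -, rfl⟩
  generalize hR : Metric.diam (Set.univ : Set M) = R at *
  have key : ∀ S ∈ SonOf (Set.univ : Set M), ∃ z, S = Metric.ball z R := by
    rintro S ⟨z, -, h⟩
    exact ⟨z, by rw [h, hR]⟩
  have sub : ∀ x y : M, dist x y < R → Metric.ball x R ⊆ Metric.ball y R := by
    intro x y h w hw
    rw [Metric.mem_ball] at hw ⊢
    exact lt_of_le_of_lt (hM w x y) (max_lt hw h)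
  haveI : Nonempty M := ⟨a⟩
  choose! c hc using key
  refine Set.infinite_of_injOn_mapsTo (f := fun S => Metric.ball (op (c S) a) R) ?_ ?_ hsons
  · intro S hS T hT h
    have h1 : op (c S) a ∈ Metric.ball (op (c T) a) R := by
      have h' : Metric.ball (op (c S) a) R = Metric.ball (op (c T) a) R := h
      rw [← h']
      exact Metric.mem_ball_self hpos
    rw [Metric.mem_ball, hr] at h1
    rw [hc S hS, hc T hT]
    exact Set.Subset.antisymm (sub _ _ h1) (sub _ _ (by rwa [dist_comm]))
  · intro S hS
    refine ⟨⟨op (c S) a, Set.mem_univ _, by rw [hR]⟩, fun x => ⟨op (c S) x.1, ?_⟩, ?_⟩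
    · have hx := x.2
      rw [Metric.mem_ball] at hx ⊢
      rwa [hl]
    · exact Isometry.of_dist_eq fun x y => hl x.1 y.1 (c S)
end
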